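/- arXiv:1205.3454 — 4 statements merged into one kernel-verified Lean document; each statement's English description precedes it below -/
import Mathlib

section
/- Let S be an idempotent covered semigroup. Then E = {(s,e,σ) : e ∈ E(S), se = s} ∪ {(e,s,τ) : e ∈ E(S), e 𝓛 s}, where 𝓛 denotes Green's 𝓛-relation on S. -/
namespace SemibandEmbed

/-- The two-element right-zero semigroup `R₂ = {σ, τ}`. -/
inductive R2 : Type where
  | σ : R2
  | τ : R2
  deriving DecidableEq

section GreenDefs

variable {S : Type*} [Semigroup S]

/-- Green's relation 𝓡 : `a 𝓡 b` iff `a S¹ = b S¹` (inside `S¹ = WithOne S`). -/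
def greenR (a b : S) : Prop :=
  {x : WithOne S | ∃ u : WithOne S, x = (a : WithOne S) * u} =
    {x : WithOne S | ∃ u : WithOne S, x = (b : WithOne S) * u}

/-- Green's relation 𝓛 : `a 𝓛 b` iff `S¹ a = S¹ b`. -/
def greenL (a b : S) : Prop :=
  {x : WithOne S | ∃ u : WithOne S, x = u * (a : WithOne S)} =
    {x : WithOne S | ∃ u : WithOne S, x = u * (b : WithOne S)}

/-- Green's relation 𝓗 = 𝓛 ∩ 𝓡. -/
def greenH (a b : S) : Prop := greenL a b ∧ greenR a b

/-- Green's relation 𝓓 : `a 𝓓 b` iff `a 𝓡 c` and `c 𝓛 b` for some `c`. -/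
def greenD (a b : S) : Prop := ∃ c : S, greenR a c ∧ greenL c b

/-- Green's relation 𝓙 : `a 𝓙 b` iff `S¹ a S¹ = S¹ b S¹`. -/
def greenJ (a b : S) : Prop :=
  {x : WithOne S | ∃ u v : WithOne S, x = u * (a : WithOne S) * v} =
    {x : WithOne S | ∃ u v : WithOne S, x = u * (b : WithOne S) * v}

/-- Mitsch's natural partial order on a semigroup. -/
def natLe (a b : S) : Prop := ∃ x y : S, a = x * b ∧ a = b * y ∧ a = a * y

end GreenDefs

/-- A semigroup is idempotent covered if every element `s` satisfies `s e = s = f s`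
for some idempotents `e`, `f`. -/
def IdemCovered (S : Type*) [Semigroup S] : Prop :=
  ∀ s : S, ∃ e f : S, IsIdempotentElem e ∧ IsIdempotentElem f ∧ s * e = s ∧ f * s = s

/-- A semigroup is regular if every `a` satisfies `a x a = a` for some `x`. -/
def IsRegularSemigroup (S : Type*) [Semigroup S] : Prop :=
  ∀ a : S, ∃ x : S, a * x * a = a

/-- A semigroup is periodic if every element generates a finite monogenic subsemigroup,
i.e. `aᵐ = aⁿ` for some `0 < m < n` (powers computed in `S¹ = WithOne S`). -/
def IsPeriodic (S : Type*) [Semigroup S] : Prop :=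
  ∀ a : S, ∃ m n : ℕ, 0 < m ∧ m < n ∧ (a : WithOne S) ^ m = (a : WithOne S) ^ n

/-- `𝓗` is a left congruence. -/
def IsLeftCongH (S : Type*) [Semigroup S] : Prop :=
  ∀ a b c : S, greenH a b → greenH (c * a) (c * b)

/-- `𝓗` is a right congruence. -/
def IsRightCongH (S : Type*) [Semigroup S] : Prop :=
  ∀ a b c : S, greenH a b → greenH (a * c) (b * c)

/-- A semigroup is completely regular if every element is 𝓗-related to an idempotent. -/
def IsCompletelyRegular (S : Type*) [Semigroup S] : Prop :=
  ∀ a : S, ∃ e : S, IsIdempotentElem e ∧ greenH a e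

section SemidirectProduct

variable {S : Type*} [Semigroup S]

/-- The multiplication of the semidirect product `(S × S) * R₂`:
`(t₁,s₁,σ)·(t₂,s₂,α) = (t₁s₂, s₁s₂, α)` and `(t₁,s₁,τ)·(t₂,s₂,α) = (t₁t₂, s₁t₂, α)`. -/
def sdMul (x y : S × S × R2) : S × S × R2 :=
  match x, y with
  | (t₁, s₁, R2.σ), (_, s₂, α) => (t₁ * s₂, s₁ * s₂, α)
  | (t₁, s₁, R2.τ), (t₂, _, α) => (t₁ * t₂, s₁ * t₂, α)

instance : Mul (S × S × R2) := ⟨sdMul⟩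

theorem sdMul_def (x y : S × S × R2) : x * y = sdMul x y := rfl

instance : Semigroup (S × S × R2) where
  mul_assoc x y z := by
    obtain ⟨t₁, s₁, α₁⟩ := x
    obtain ⟨t₂, s₂, α₂⟩ := y
    obtain ⟨t₃, s₃, α₃⟩ := z
    cases α₁ <;> cases α₂ <;> simp [sdMul_def, sdMul, mul_assoc]

/-- The set `E = {(s,t,α) ∈ E(T*R₂) : s ∈ S¹ t}`. -/
def Eset (S : Type*) [Semigroup S] : Set (S × S × R2) :=
  {x | IsIdempotentElem x ∧ ∃ a : WithOne S, (x.1 : WithOne S) = a * (x.2.1 : WithOne S)}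

/-- `T(S)`: the subsemigroup of the semidirect product generated by `E`. -/
def TS (S : Type*) [Semigroup S] : Subsemigroup (S × S × R2) :=
  Subsemigroup.closure (Eset S)

/-- Green's `𝓛` is a right congruence. -/
theorem greenL_mul_right {S : Type*} [Semigroup S] {a b : S} (hab : greenL a b) (c : S) :
    greenL (a * c) (b * c) := by
  have key : ∀ {a b : S}, greenL a b → ∀ x : WithOne S,
      (∃ u : WithOne S, x = u * ((a * c : S) : WithOne S)) →
      (∃ u : WithOne S, x = u * ((b * c : S) : WithOne S)) := by
    intro a b hab x hx
    obtain ⟨u, rfl⟩ := hx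
    have h1 : (u * (a : WithOne S)) ∈
        {x : WithOne S | ∃ u : WithOne S, x = u * (a : WithOne S)} := ⟨u, rfl⟩
    rw [greenL] at hab
    rw [hab] at h1
    obtain ⟨w, hw⟩ := h1
    refine ⟨w, ?_⟩
    rw [WithOne.coe_mul, WithOne.coe_mul, ← mul_assoc, hw, mul_assoc]
  have hab' : greenL b a := hab.symm
  ext x
  exact ⟨key hab x, key hab' x⟩

/-- `R(S) = {(s,t,α) ∈ T(S) : s 𝓛 t}`, a subsemigroup of `T(S)`. -/
def RS (S : Type*) [Semigroup S] : Subsemigroup ↥(TS S) where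
  carrier := {x | greenL (x : S × S × R2).1 (x : S × S × R2).2.1}
  mul_mem' := by
    rintro ⟨⟨s, t, α⟩, hx⟩ ⟨⟨u, v, β⟩, hy⟩ hxs hys
    simp only [Set.mem_setOf_eq] at hxs hys ⊢
    cases α <;> exact greenL_mul_right hxs _

end SemidirectProduct


/- An idempotent `(s, t, σ)` has `t² = t` and `st = s`, which already puts `s` in `S¹t`.
An idempotent `(s, t, τ)` has `s² = s` and `ts = t`; for idempotent `s` the latter says
`t ∈ S¹s`, so that together with `s ∈ S¹t` it amounts to `s 𝓛 t`. -/

section LeftIdeals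

variable {S : Type*} [Semigroup S] {a b e s : S}

theorem greenL_iff :
    greenL a b ↔
      (∃ u : WithOne S, (a : WithOne S) = u * b) ∧ ∃ v : WithOne S, (b : WithOne S) = v * a := by
  refine ⟨fun h => ⟨h.subset ⟨1, (one_mul _).symm⟩, h.superset ⟨1, (one_mul _).symm⟩⟩, ?_⟩
  rintro ⟨⟨u, hu⟩, v, hv⟩
  ext x
  constructor
  · rintro ⟨w, rfl⟩
    exact ⟨w * u, by rw [mul_assoc, ← hu]⟩
  · rintro ⟨w, rfl⟩
    exact ⟨w * v, by rw [mul_assoc, ← hv]⟩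

theorem exists_coe_eq_mul_coe_of_mul_eq_self (h : s * e = s) :
    ∃ u : WithOne S, (s : WithOne S) = u * e :=
  ⟨s, by rw [← WithOne.coe_mul, h]⟩

theorem exists_coe_eq_mul_coe_iff_mul_eq_self (he : IsIdempotentElem e) :
    (∃ u : WithOne S, (s : WithOne S) = u * e) ↔ s * e = s := by
  refine ⟨?_, exists_coe_eq_mul_coe_of_mul_eq_self⟩
  rintro ⟨u, hu⟩
  apply WithOne.coe_injective
  rw [WithOne.coe_mul, hu, mul_assoc, ← WithOne.coe_mul, he.eq]

theorem greenL_iff_of_isIdempotentElem (he : IsIdempotentElem e) :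
    greenL e s ↔ s * e = s ∧ ∃ u : WithOne S, (e : WithOne S) = u * s := by
  rw [greenL_iff, exists_coe_eq_mul_coe_iff_mul_eq_self he, and_comm]

end LeftIdeals

section Idempotents

variable {S : Type*} [Semigroup S] {s t : S}

theorem isIdempotentElem_mk_σ_iff :
    IsIdempotentElem (s, t, R2.σ) ↔ IsIdempotentElem t ∧ s * t = s := by
  simp only [IsIdempotentElem, sdMul_def, sdMul, Prod.mk.injEq, and_true]
  exact and_comm

theorem isIdempotentElem_mk_τ_iff :
    IsIdempotentElem (s, t, R2.τ) ↔ IsIdempotentElem s ∧ t * s = t := by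
  simp only [IsIdempotentElem, sdMul_def, sdMul, Prod.mk.injEq, and_true]

theorem mk_σ_mem_Eset_iff : (s, t, R2.σ) ∈ Eset S ↔ IsIdempotentElem t ∧ s * t = s := by
  change IsIdempotentElem (s, t, R2.σ) ∧ (∃ a : WithOne S, (s : WithOne S) = a * t) ↔ _
  rw [isIdempotentElem_mk_σ_iff]
  exact and_iff_left_of_imp fun h => exists_coe_eq_mul_coe_of_mul_eq_self h.2

theorem mk_τ_mem_Eset_iff : (s, t, R2.τ) ∈ Eset S ↔ IsIdempotentElem s ∧ greenL s t := by
  change IsIdempotentElem (s, t, R2.τ) ∧ (∃ a : WithOne S, (s : WithOne S) = a * t) ↔ _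
  rw [isIdempotentElem_mk_τ_iff, and_assoc]
  exact and_congr_right fun hs => (greenL_iff_of_isIdempotentElem hs).symm

end Idempotents

theorem statement_1_general (S : Type*) [Semigroup S] :
    Eset S =
      {x : S × S × R2 | ∃ s e : S, IsIdempotentElem e ∧ s * e = s ∧ x = (s, e, R2.σ)} ∪
      {x : S × S × R2 | ∃ s e : S, IsIdempotentElem e ∧ greenL e s ∧ x = (e, s, R2.τ)} := by
  ext ⟨s, t, _ | _⟩
  · simp [mk_σ_mem_Eset_iff]
  · simp [mk_τ_mem_Eset_iff]

/-- description of the set `E` for an idempotent covered semigroup. -/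
theorem statement_1 {S : Type*} [Semigroup S] (hS : IdemCovered S) :
    Eset S =
      {x : S × S × R2 | ∃ s e : S, IsIdempotentElem e ∧ s * e = s ∧ x = (s, e, R2.σ)} ∪
      {x : S × S × R2 | ∃ s e : S, IsIdempotentElem e ∧ greenL e s ∧ x = (e, s, R2.τ)} :=
  statement_1_general S

end SemibandEmbed
end

section
/- Let S be an idempotent covered semigroup. Then T(S) = {(s,t,α) ∈ S × S × R₂ : s ∈ S¹t}; every element of T(S) is a product of at most 4 elements of E; and the set of idempotents of T(S) equals E. -/
namespace SemibandEmbed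

/-!
Membership `s ∈ S¹t` survives right multiplication of both entries, so the triples satisfying it
form a subsemigroup containing `E`; hence `T(S)` lies inside it, and its idempotents lie in `E`.
Conversely, let `f * t = t = t * e` with `e`, `f` idempotent. Any `s ∈ S¹t` is `b * t` with
`b * f = b`, and then `(s, t, α) = (b, f, σ) (f, f, τ) (t, e, σ) (e, e, α)`: the factor `(f, f, τ)`
lets the *first* entry `t` of the next factor act on `(b, f)`, and `(e, e, α)` only sets the last
entry to `α`.
-/

section Factorization

variable {S : Type*} [Semigroup S]

/-- Green's preorder `s ≤_𝓛 t`, that is `s ∈ S¹t`, with `WithOne S` in the role of `S¹`. -/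
def leL (s t : S) : Prop :=
  ∃ a : WithOne S, (s : WithOne S) = a * (t : WithOne S)

theorem leL_refl (s : S) : leL s s :=
  ⟨1, (one_mul _).symm⟩

theorem leL_mul_left (s t : S) : leL (s * t) t :=
  ⟨s, WithOne.coe_mul s t⟩

theorem leL.mul_right {s t : S} (h : leL s t) (c : S) : leL (s * c) (t * c) := by
  obtain ⟨a, ha⟩ := h
  exact ⟨a, by rw [WithOne.coe_mul, WithOne.coe_mul, ha, mul_assoc]⟩

theorem leL.eq_or_exists_mul_eq {s t : S} (h : leL s t) : s = t ∨ ∃ a : S, a * t = s := by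
  obtain ⟨a, ha⟩ := h
  cases a with
  | one => exact .inl (WithOne.coe_inj.mp (ha.trans (one_mul _)))
  | coe a => exact .inr ⟨a, (WithOne.coe_inj.mp ha).symm⟩

theorem leL.exists_mul_eq_of_isIdempotentElem {s t f : S} (h : leL s t)
    (hf : IsIdempotentElem f) (hft : f * t = t) : ∃ b : S, b * f = b ∧ b * t = s := by
  obtain rfl | ⟨a, rfl⟩ := h.eq_or_exists_mul_eq
  · exact ⟨f, hf, hft⟩
  · exact ⟨a * f, by rw [mul_assoc, hf.eq], by rw [mul_assoc, hft]⟩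

theorem mk_σ_mul (s t : S) (x : S × S × R2) :
    (s, t, R2.σ) * x = (s * x.2.1, t * x.2.1, x.2.2) :=
  rfl

theorem mk_τ_mul (s t : S) (x : S × S × R2) :
    (s, t, R2.τ) * x = (s * x.1, t * x.1, x.2.2) :=
  rfl

/-- The subsemigroup `{(s,t,α) : s ∈ S¹t}` of `T*R₂`, which turns out to be `T(S)` when `S` is
idempotent covered. -/
def leLSubsemigroup (S : Type*) [Semigroup S] : Subsemigroup (S × S × R2) where
  carrier := {x | leL x.1 x.2.1}
  mul_mem' := by
    rintro ⟨s, t, _ | _⟩ y (hst : leL s t) _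
    · exact hst.mul_right y.2.1
    · exact hst.mul_right y.1

theorem TS_le_leLSubsemigroup : TS S ≤ leLSubsemigroup S :=
  Subsemigroup.closure_le.mpr fun _ hx => hx.2

theorem setOf_mem_TS_and_isIdempotentElem :
    {x : S × S × R2 | x ∈ TS S ∧ IsIdempotentElem x} = Eset S :=
  Set.Subset.antisymm (fun _ hx => ⟨hx.2, TS_le_leLSubsemigroup hx.1⟩)
    fun _ hx => ⟨Subsemigroup.subset_closure hx, hx.1⟩

theorem mk_σ_mem_Eset {s f : S} (hf : IsIdempotentElem f) (hsf : s * f = s) :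
    (s, f, R2.σ) ∈ Eset S := by
  have s_leL_f : leL s f := by simpa only [hsf] using leL_mul_left s f
  refine ⟨?_, s_leL_f⟩
  rw [IsIdempotentElem, mk_σ_mul, hsf, hf.eq]

theorem mk_self_mem_Eset {f : S} (hf : IsIdempotentElem f) (α : R2) : (f, f, α) ∈ Eset S := by
  refine ⟨?_, leL_refl f⟩
  cases α
  · rw [IsIdempotentElem, mk_σ_mul, hf.eq]
  · rw [IsIdempotentElem, mk_τ_mul, hf.eq]

theorem mk_σ_mul_mk_τ_mul_mk_σ_mul_mk {b t e f : S} (hf : IsIdempotentElem f) (hbf : b * f = b)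
    (hft : f * t = t) (hte : t * e = t) (α : R2) :
    (b, f, R2.σ) * (f, f, R2.τ) * (t, e, R2.σ) * (e, e, α) = (b * t, t, α) :=
  calc
    _ = (b, f, R2.τ) * (t, e, R2.σ) * (e, e, α) := by rw [mk_σ_mul, hbf, hf.eq]
    _ = (b * t, t, R2.σ) * (e, e, α) := by rw [mk_τ_mul, hft]
    _ = (b * t, t, α) := by rw [mk_σ_mul, mul_assoc, hte]

theorem IdemCovered.exists_eq_mul_mul_mul (hS : IdemCovered S) {x : S × S × R2}
    (hx : x ∈ leLSubsemigroup S) :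
    ∃ e₁ e₂ e₃ e₄ : S × S × R2, e₁ ∈ Eset S ∧ e₂ ∈ Eset S ∧ e₃ ∈ Eset S ∧ e₄ ∈ Eset S ∧
      x = e₁ * e₂ * e₃ * e₄ := by
  obtain ⟨s, t, α⟩ := x
  have hst : leL s t := hx
  obtain ⟨e, f, he, hf, hte, hft⟩ := hS t
  obtain ⟨b, hbf, rfl⟩ := hst.exists_mul_eq_of_isIdempotentElem hf hft
  exact ⟨_, _, _, _, mk_σ_mem_Eset hf hbf, mk_self_mem_Eset hf R2.τ, mk_σ_mem_Eset he hte,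
    mk_self_mem_Eset he α, (mk_σ_mul_mk_τ_mul_mk_σ_mul_mk hf hbf hft hte α).symm⟩

theorem IdemCovered.TS_eq_leLSubsemigroup (hS : IdemCovered S) : TS S = leLSubsemigroup S := by
  refine le_antisymm TS_le_leLSubsemigroup fun x hx => ?_
  obtain ⟨e₁, e₂, e₃, e₄, h₁, h₂, h₃, h₄, rfl⟩ := hS.exists_eq_mul_mul_mul hx
  have Eset_subset_TS : Eset S ⊆ TS S := Subsemigroup.subset_closure
  exact mul_mem (mul_mem (mul_mem (Eset_subset_TS h₁) (Eset_subset_TS h₂)) (Eset_subset_TS h₃))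
    (Eset_subset_TS h₄)

end Factorization

/-- `T(S) = {(s,t,α) : s ∈ S¹t}` is a semiband of depth 4 with `E(T(S)) = E`. -/
theorem statement_2 {S : Type*} [Semigroup S] (hS : IdemCovered S) :
    (TS S : Set (S × S × R2)) =
        {x : S × S × R2 | ∃ a : WithOne S, (x.1 : WithOne S) = a * (x.2.1 : WithOne S)} ∧
    (∀ x ∈ TS S, ∃ e₁ e₂ e₃ e₄ : S × S × R2, e₁ ∈ Eset S ∧ e₂ ∈ Eset S ∧ e₃ ∈ Eset S ∧
        e₄ ∈ Eset S ∧ x = e₁ * e₂ * e₃ * e₄) ∧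
    {x : S × S × R2 | x ∈ TS S ∧ IsIdempotentElem x} = Eset S := by
  exact ⟨congrArg SetLike.coe hS.TS_eq_leLSubsemigroup,
    fun _ hx => hS.exists_eq_mul_mul_mul (TS_le_leLSubsemigroup hx),
    setOf_mem_TS_and_isIdempotentElem⟩

end SemibandEmbed
end

section
/- An idempotent covered semigroup S is periodic (every element generates a finite monogenic subsemigroup, i.e., for every a ∈ S there exist positive integers m < n with aᵐ = aⁿ) if and only if the semiband T(S) is periodic. -/
namespace SemibandEmbed

/-!
Let `c` be the coordinate of `x = (t, s, α)` selected by `α`, namely `s` for `σ` and `t` for `τ`.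
Then `x ^ (n + 1) = (t * c ^ n, s * c ^ n, α)`, and the coordinate of this power selected by `α` is
`c ^ (n + 1)`, so `x` is periodic if and only if `c` is. If `a * e = a` with `e` idempotent, then
`(a, e, σ) * (e, e, τ) = (a, e, τ)` is an element of `T(S)` whose selected coordinate is `a`.
-/

open Function

section PeriodicElements

variable {M N : Type*} [Semigroup M] [Semigroup N]

/-- An element of a semigroup is periodic if the monogenic subsemigroup it generates is finite. As
in `IsPeriodic`, powers are computed in `WithOne M`. -/
def IsPeriodicElem (a : M) : Prop :=
  ∃ m n : ℕ, 0 < m ∧ m < n ∧ (a : WithOne M) ^ m = (a : WithOne M) ^ n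

theorem coe_iterate_mul_left_self (a : M) (n : ℕ) :
    (((a * ·)^[n] a : M) : WithOne M) = (a : WithOne M) ^ (n + 1) := by
  have h : Semiconj ((↑) : M → WithOne M) (a * ·) ((a : WithOne M) * ·) := WithOne.coe_mul a
  rw [(h.iterate_right n).eq, mul_left_iterate, pow_succ]

theorem isPeriodicElem_iff_iterate {a : M} :
    IsPeriodicElem a ↔ ∃ i j : ℕ, i < j ∧ (a * ·)^[i] a = (a * ·)^[j] a := by
  constructor
  · rintro ⟨m, n, hm, hmn, h⟩
    obtain ⟨i, rfl⟩ := Nat.exists_eq_add_one.mpr hm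
    obtain ⟨j, rfl⟩ := Nat.exists_eq_add_one.mpr (hm.trans hmn)
    rw [← coe_iterate_mul_left_self, ← coe_iterate_mul_left_self, WithOne.coe_inj] at h
    exact ⟨i, j, Nat.lt_of_succ_lt_succ hmn, h⟩
  · rintro ⟨i, j, hij, h⟩
    refine ⟨i + 1, j + 1, i.succ_pos, Nat.succ_lt_succ hij, ?_⟩
    rw [← coe_iterate_mul_left_self, ← coe_iterate_mul_left_self, h]

theorem IsPeriodicElem.of_semiconj {a : M} {b : N} {g : N → M} {k : ℕ} (hb : IsPeriodicElem b)
    (hg : Semiconj g (b * ·) (a * ·)) (hgb : g b = (a * ·)^[k] a) : IsPeriodicElem a := by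
  obtain ⟨i, j, hij, h⟩ := isPeriodicElem_iff_iterate.mp hb
  have iterate_add_eq (n : ℕ) : (a * ·)^[n + k] a = g ((b * ·)^[n] b) := by
    rw [iterate_add_apply, ← hgb, (hg.iterate_right n).eq]
  refine isPeriodicElem_iff_iterate.mpr ⟨i + k, j + k, Nat.add_lt_add_right hij k, ?_⟩
  rw [iterate_add_eq, iterate_add_eq, h]

theorem isPeriodicElem_map_iff {f : M →ₙ* N} (hf : Injective f) {a : M} :
    IsPeriodicElem (f a) ↔ IsPeriodicElem a := by
  simp only [IsPeriodicElem, ← WithOne.mapMulHom_coe, ← map_pow,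
    (WithOne.mapMulHom_injective hf).eq_iff]

theorem isPeriodicElem_coe {T : Subsemigroup M} {a : T} :
    IsPeriodicElem (a : M) ↔ IsPeriodicElem a :=
  isPeriodicElem_map_iff (f := MulMemClass.subtype T) Subtype.val_injective

theorem IsPeriodic.subsemigroup (hM : IsPeriodic M) (T : Subsemigroup M) : IsPeriodic T :=
  fun a ↦ isPeriodicElem_coe.mp (hM a)

end PeriodicElements

section SemidirectProductPowers

variable {S : Type*} [Semigroup S]

/-- The coordinate of `(t, s, β)` through which it enters a product `(t', s', α) * (t, s, β)`:
it is `s` for `α = σ` and `t` for `α = τ`. -/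
def R2.select : R2 → S × S × R2 → S
  | .σ, x => x.2.1
  | .τ, x => x.1

theorem mul_eq_select (x y : S × S × R2) :
    x * y = (x.1 * x.2.2.select y, x.2.1 * x.2.2.select y, y.2.2) := by
  obtain ⟨t, s, _ | _⟩ := x <;> rfl

theorem R2.select_mul_right (α β : R2) (x : S × S × R2) (c : S) :
    α.select (x.1 * c, x.2.1 * c, β) = α.select x * c := by
  cases α <;> rfl

theorem isPeriodicElem_select_iff {x : S × S × R2} :
    IsPeriodicElem (x.2.2.select x) ↔ IsPeriodicElem x := by
  have embed_semiconj : Semiconj (fun c ↦ (x.1 * c, x.2.1 * c, x.2.2))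
      (x.2.2.select x * ·) (x * ·) := fun c ↦ by
    simp only [mul_eq_select x, R2.select_mul_right]
  have select_semiconj : Semiconj x.2.2.select (x * ·) (x.2.2.select x * ·) := fun y ↦ by
    simp only [mul_eq_select x, R2.select_mul_right]
  exact ⟨fun h ↦ h.of_semiconj (k := 1) embed_semiconj (mul_eq_select x x).symm,
    fun h ↦ h.of_semiconj (k := 0) select_semiconj rfl⟩

theorem IsPeriodic.semidirectProduct (hS : IsPeriodic S) : IsPeriodic (S × S × R2) :=
  fun x ↦ isPeriodicElem_select_iff.mp (hS (x.2.2.select x))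

theorem mk_σ_mem_Eset_s5 {a e : S} (he : IsIdempotentElem e) (hae : a * e = a) :
    (a, e, R2.σ) ∈ Eset S := by
  refine ⟨?_, a, ?_⟩
  · simp only [IsIdempotentElem, mul_eq_select, R2.select, hae, he.eq]
  · rw [← WithOne.coe_mul, hae]

theorem mk_self_τ_mem_Eset {e : S} (he : IsIdempotentElem e) : (e, e, R2.τ) ∈ Eset S :=
  ⟨by simp only [IsIdempotentElem, mul_eq_select, R2.select, he.eq], 1, (one_mul _).symm⟩

theorem mk_τ_mem_TS {a e : S} (he : IsIdempotentElem e) (hae : a * e = a) :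
    (a, e, R2.τ) ∈ TS S := by
  have factorization : (a, e, R2.σ) * (e, e, R2.τ) = (a, e, R2.τ) := by
    simp only [mul_eq_select, R2.select, hae, he.eq]
  rw [← factorization]
  exact mul_mem (Subsemigroup.subset_closure (mk_σ_mem_Eset_s5 he hae))
    (Subsemigroup.subset_closure (mk_self_τ_mem_Eset he))

end SemidirectProductPowers

theorem statement_5_general {S : Type*} [Semigroup S]
    (hS : ∀ a : S, ∃ e : S, IsIdempotentElem e ∧ a * e = a) :
    IsPeriodic S ↔ IsPeriodic ↥(TS S) := by
  refine ⟨fun h ↦ h.semidirectProduct.subsemigroup (TS S), fun h a ↦ ?_⟩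
  obtain ⟨e, he, hae⟩ := hS a
  have periodic : IsPeriodicElem (a, e, R2.τ) :=
    isPeriodicElem_coe.mpr (h ⟨_, mk_τ_mem_TS he hae⟩)
  exact isPeriodicElem_select_iff.mpr periodic

/-- `S` is periodic iff `T(S)` is periodic. -/
theorem statement_5 {S : Type*} [Semigroup S] (hS : IdemCovered S) :
    IsPeriodic S ↔ IsPeriodic ↥(TS S) := by
  refine statement_5_general fun a ↦ ?_
  obtain ⟨e, _, he, -, hae, -⟩ := hS a
  exact ⟨e, he, hae⟩

end SemibandEmbed
end

section
/- An idempotent covered semigroup S is regular (for every a ∈ S there is x ∈ S with axa = a) if and only if the semiband T(S) is regular. -/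
namespace SemibandEmbed

/-!
Sandwiching `(v, v, σ)` between two copies of `(s, t, α)` gives `(s * v * t, t * v * t, α)`. Every
element of `T(S)` has `s ∈ S¹ t`, so if `t * v * t = t` then also `s * v * t = s`, and the sandwich
collapses to `(s, t, α)`. Conversely, for covering idempotents `e`, `f` of `a`, the factorization
`(a, a, σ) = (f, f, τ) * (a, e, σ)` puts the diagonal triples in `T(S)`, and sandwiching any
`(u, v, β)` between two copies of `(a, a, σ)` gives `(a * v * a, a * v * a, σ)`.
-/

section Regularity

variable {S : Type*} [Semigroup S]

theorem IsRegularSemigroup.idemCovered (h : IsRegularSemigroup S) : IdemCovered S := by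
  intro s
  obtain ⟨x, hx⟩ := h s
  refine ⟨x * s, s * x, ?_, ?_, by rw [← mul_assoc, hx], hx⟩
  · rw [IsIdempotentElem, mul_assoc, ← mul_assoc s, hx]
  · rw [IsIdempotentElem, ← mul_assoc, hx]

@[simp]
theorem mk_sigma_mul_mk (t₁ s₁ t₂ s₂ : S) (α : R2) :
    (t₁, s₁, R2.σ) * (t₂, s₂, α) = (t₁ * s₂, s₁ * s₂, α) :=
  rfl

@[simp]
theorem mk_tau_mul_mk (t₁ s₁ t₂ s₂ : S) (α : R2) :
    (t₁, s₁, R2.τ) * (t₂, s₂, α) = (t₁ * t₂, s₁ * t₂, α) :=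
  rfl

theorem isIdempotentElem_mk_sigma_iff {s t : S} :
    IsIdempotentElem (s, t, R2.σ) ↔ s * t = s ∧ IsIdempotentElem t := by
  simp [IsIdempotentElem]

theorem isIdempotentElem_mk_tau_iff {s t : S} :
    IsIdempotentElem (s, t, R2.τ) ↔ IsIdempotentElem s ∧ t * s = t := by
  simp [IsIdempotentElem]

theorem mul_diag_mul (s t v : S) (α : R2) :
    (s, t, α) * (v, v, R2.σ) * (s, t, α) = (s * v * t, t * v * t, α) := by
  cases α <;> rfl

theorem diag_mul_mul_diag (a u v : S) (β : R2) :
    (a, a, R2.σ) * (u, v, β) * (a, a, R2.σ) = (a * v * a, a * v * a, R2.σ) := by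
  cases β <;> rfl

theorem exists_fst_eq_mul_of_mem_TS {x : S × S × R2} (hx : x ∈ TS S) :
    ∃ a : WithOne S, (x.1 : WithOne S) = a * (x.2.1 : WithOne S) := by
  induction hx using Subsemigroup.closure_induction with
  | mem x hx => exact hx.2
  | mul x y _ _ ihx _ =>
    obtain ⟨s, t, α⟩ := x
    obtain ⟨a, ha : (s : WithOne S) = a * t⟩ := ihx
    obtain ⟨u, v, β⟩ := y
    refine ⟨a, ?_⟩
    cases α <;> simp [ha, mul_assoc]

theorem mul_mul_eq_of_eq_mul {s t v : S} {a : WithOne S} (hs : (s : WithOne S) = a * t)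
    (hv : t * v * t = t) : s * v * t = s := by
  apply WithOne.coe_injective
  calc ((s * v * t : S) : WithOne S)
      = a * ((t * v * t : S) : WithOne S) := by simp only [WithOne.coe_mul, hs, mul_assoc]
    _ = s := by rw [hv, hs]

theorem diag_mem_TS_of_isIdempotentElem {e f t : S} (he : IsIdempotentElem e)
    (hf : IsIdempotentElem f) (hte : t * e = t) (hft : f * t = t) : (t, t, R2.σ) ∈ TS S := by
  have hf_mem : (f, f, R2.τ) ∈ TS S :=
    Subsemigroup.subset_closure ⟨isIdempotentElem_mk_tau_iff.2 ⟨hf, hf⟩, 1, (one_mul _).symm⟩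
  have hte_mem : (t, e, R2.σ) ∈ TS S :=
    Subsemigroup.subset_closure ⟨isIdempotentElem_mk_sigma_iff.2 ⟨hte, he⟩, t,
      by rw [← WithOne.coe_mul, hte]⟩
  simpa [hft] using mul_mem hf_mem hte_mem

theorem IdemCovered.diag_mem_TS (hS : IdemCovered S) (t : S) : (t, t, R2.σ) ∈ TS S := by
  obtain ⟨e, f, he, hf, hte, hft⟩ := hS t
  exact diag_mem_TS_of_isIdempotentElem he hf hte hft

theorem IsRegularSemigroup.isRegularSemigroup_TS (h : IsRegularSemigroup S) :
    IsRegularSemigroup ↥(TS S) := by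
  rintro ⟨⟨s, t, α⟩, hx⟩
  obtain ⟨v, hv⟩ := h t
  obtain ⟨a, hs⟩ := exists_fst_eq_mul_of_mem_TS hx
  refine ⟨⟨(v, v, R2.σ), h.idemCovered.diag_mem_TS v⟩, Subtype.ext ?_⟩
  calc (s, t, α) * (v, v, R2.σ) * (s, t, α)
      = (s * v * t, t * v * t, α) := mul_diag_mul s t v α
    _ = (s, t, α) := by rw [mul_mul_eq_of_eq_mul hs hv, hv]

theorem IdemCovered.isRegularSemigroup_of_TS (hS : IdemCovered S)
    (h : IsRegularSemigroup ↥(TS S)) : IsRegularSemigroup S := by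
  intro a
  obtain ⟨⟨⟨u, v, β⟩, _⟩, hinv⟩ := h ⟨(a, a, R2.σ), hS.diag_mem_TS a⟩
  have hinv' : (a, a, R2.σ) * (u, v, β) * (a, a, R2.σ) = (a, a, R2.σ) :=
    congrArg Subtype.val hinv
  rw [diag_mul_mul_diag] at hinv'
  exact ⟨v, congrArg Prod.fst hinv'⟩

end Regularity

theorem statement_6_general {S : Type*} [Semigroup S] :
    IsRegularSemigroup S ↔ IdemCovered S ∧ IsRegularSemigroup ↥(TS S) :=
  ⟨fun h ↦ ⟨h.idemCovered, h.isRegularSemigroup_TS⟩, fun h ↦ h.1.isRegularSemigroup_of_TS h.2⟩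

/-- `S` is regular iff `T(S)` is regular. -/
theorem statement_6 {S : Type*} [Semigroup S] (hS : IdemCovered S) :
    IsRegularSemigroup S ↔ IsRegularSemigroup ↥(TS S) :=
  statement_6_general.trans (and_iff_right hS)

end SemibandEmbed
end
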